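/- Let n₁, n₂ be squarefree primary Gaussian integers with n₁, n₂ and 2 pairwise coprime, set q = n₁ n₂ and χ(m) = (m/n₁)_4 · conj((m/n₂)_4). Then Σ_{m ∈ ℤ[i]} W(N(m)/M) χ(m) = (χ(−2i) g(n₁) conj(g(n₂)) M / N(q)) · (n₂/n₁)_4 · conj((n₁/n₂)_4) · (−1/n₂)_4 · Σ_{k ∈ ℤ[i]} W̃( √(N(k) M / N(q)) ) conj(χ)(k), where W̃(t) = ∫∫_{ℝ²} W(N(x+yi)) ẽ( t(x+yi)/(2i) ) dx dy for t ≥ 0. -/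

import Mathlib

/-!
The formula is Poisson summation on the lattice `ℤ[i] ⊆ ℂ` combined with the evaluation of a
complete character sum modulo `q = n₁ n₂`.

**Analytic part.** The function `bump z = W(|z|²)` is smooth, compactly supported and radial, so its
Fourier transform is radial too, and its value at `v` is `W̃ ‖v‖` (`fourier_bump`). Since `χ` is
periodic modulo `q`, the left side splits over the residue classes `a + q ℤ[i]`, and
`poisson_class` transforms the sum of `W(N(a + q l) / M)` over `l` into
`Σ_k (M / N q) W̃(√(N k M / N q)) ẽ(-k a / (2 i q))`. The factor `2 i` comes from the pairing
`ẽ(z) = exp(4 π i Re z)`, whose dual lattice is `(1/2) ℤ[i]`, and from reindexing the dual lattice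
by `k ↦ -i k̄`. Poisson summation itself (`poisson_prod`, `poisson_gi`) follows from two
applications of the one-dimensional formula.

**Arithmetic part.** It remains to evaluate `Σ_{a mod q} χ(a) ẽ(-k a / (2 i q))`. As `-2i` is a unit
modulo `q`, the Chinese remainder theorem allows the substitution `a = -2i (n₂ x + n₁ y)` with `x`
modulo `n₁` and `y` modulo `n₂`; the exponential becomes `ẽ(k x / n₁) ẽ(k y / n₂)` and the character
becomes `χ(-2i) (n₂/n₁)₄ conj (n₁/n₂)₄ (x/n₁)₄ conj (y/n₂)₄` (`complete_sum`). Each factor is a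
Gauss sum twisted by `k`. For squarefree `n` the symbol is a primitive character
(`OddMod.exists_primitive`), so the twist contributes exactly `conj (k/n)₄`, even when `k` and `n`
share a factor (`OddMod.twGauss_eq`). Conjugating this identity at `-k` produces the factor
`(-1/n₂)₄` (`OddMod.twGauss_star`).

All properties of the quartic symbol are derived from the congruence defining the character at an
odd prime `π`: the five values `0, ±1, ±i` are incongruent modulo `π` since `N π ≥ 5`.
-/

open scoped Classical

noncomputable section

/-- The imaginary unit `i` of `ℤ[i]`. -/
def gi : GaussianInt := ⟨0, 1⟩

/-- The quartic residue character at a prime `π` of `ℤ[i]` of odd norm: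
the unique `u ∈ {1, i, -1, -i}` with `u ≡ a ^ ((N π - 1)/4) (mod π)`, and `0` if no such
unit exists (in particular when `π ∣ a`). -/
def quarticCharPrime (a π : GaussianInt) : GaussianInt :=
  if h : ∃ u : GaussianInt, (u = 1 ∨ u = gi ∨ u = -1 ∨ u = -gi) ∧
      π ∣ (a ^ (((Zsqrtd.norm π - 1) / 4).toNat) - u) then h.choose else 0

/-- The quartic residue symbol `(a/n)₄`, extended multiplicatively in the lower entry over a
prime factorization of `n` (this is well defined for `n` of odd norm, since
`quarticCharPrime a` only depends on primes up to associates). -/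
def quarticSymbol (a n : GaussianInt) : ℂ :=
  GaussianInt.toComplex
    (((UniqueFactorizationMonoid.factors n).map (quarticCharPrime a)).prod)

/-- `n` is primary: `n ≡ 1 (mod (1+i)³)`. -/
def Primary (n : GaussianInt) : Prop := (⟨1, 1⟩ : GaussianInt) ^ 3 ∣ n - 1

/-- `n ≡ ±1 (mod (1+i)³)`. -/
def PrimaryPM (n : GaussianInt) : Prop :=
  (⟨1, 1⟩ : GaussianInt) ^ 3 ∣ n - 1 ∨ (⟨1, 1⟩ : GaussianInt) ^ 3 ∣ n + 1

/-- The smooth bump function `W` of (3.6). -/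
def Wfun (x : ℝ) : ℝ :=
  if 1 / 2 < x ∧ x < 5 / 2 then Real.exp (-1 / ((2 * x - 1) * (5 - 2 * x))) else 0

/-- `ẽ(z) = exp(2πi(z + z̄))`. -/
def etilde (z : ℂ) : ℂ := Complex.exp (2 * Real.pi * Complex.I * (z + star z))

/-- The quartic Gauss sum `g(n) = Σ_{x mod n} (x/n)₄ ẽ(x/n)`, realized as a sum over the
residue classes of `ℤ[i]` modulo `n` (the summand is well defined on residue classes). -/
def gaussSum4 (n : GaussianInt) : ℂ :=
  ∑' x : GaussianInt ⧸ Ideal.span {n},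
    quarticSymbol (Quotient.out x) n *
      etilde (GaussianInt.toComplex (Quotient.out x) / GaussianInt.toComplex n)

/-- The transform `W̃(t) = ∫∫_{ℝ²} W(N(x+yi)) ẽ(t(x+yi)/(2i)) dx dy`. -/
def Wtilde (t : ℝ) : ℂ :=
  ∫ x : ℝ, ∫ y : ℝ,
    ((Wfun (x ^ 2 + y ^ 2) : ℂ) * etilde ((t : ℂ) * (x + y * Complex.I) / (2 * Complex.I)))

/-! ### The ring of Gaussian integers -/

/-- The `ℤ`-basis `1, i` of `ℤ[i]`. -/
def giBasis : Module.Basis (Fin 2) ℤ GaussianInt :=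
  Module.Basis.ofEquivFun
    { toFun := fun z => ![z.re, z.im]
      invFun := fun v => ⟨v 0, v 1⟩
      left_inv := fun z => by simp
      right_inv := fun v => by ext i; fin_cases i <;> simp
      map_add' := fun a b => by ext i; fin_cases i <;> simp
      map_smul' := fun c a => by ext i; fin_cases i <;> simp }

instance giFree : Module.Free ℤ GaussianInt := Module.Free.of_basis giBasis

instance giFinite : Module.Finite ℤ GaussianInt := Module.Finite.of_basis giBasis

lemma giBasis_repr (z : GaussianInt) (i : Fin 2) : giBasis.repr z i = ![z.re, z.im] i := by
  simp only [giBasis, Module.Basis.ofEquivFun_repr_apply]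
  rfl

lemma giBasis_zero : giBasis 0 = 1 := by
  apply giBasis.repr.injective
  ext i
  rw [Module.Basis.repr_self, giBasis_repr]
  fin_cases i <;> simp

lemma giBasis_one : giBasis 1 = gi := by
  apply giBasis.repr.injective
  ext i
  rw [Module.Basis.repr_self, giBasis_repr]
  fin_cases i <;> simp [gi]

lemma algebra_norm_eq (z : GaussianInt) : Algebra.norm ℤ z = Zsqrtd.norm z := by
  rw [Algebra.norm_eq_matrix_det giBasis, Matrix.det_fin_two]
  simp only [Algebra.leftMulMatrix_eq_repr_mul, giBasis_repr, giBasis_zero, giBasis_one]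
  simp [gi, Zsqrtd.norm_def]

lemma card_quot (z : GaussianInt) :
    Nat.card (GaussianInt ⧸ Ideal.span {z}) = (Zsqrtd.norm z).natAbs := by
  rw [← algebra_norm_eq, ← Ideal.absNorm_span_singleton]
  rfl

lemma finite_quot {z : GaussianInt} (hz : z ≠ 0) : Finite (GaussianInt ⧸ Ideal.span {z}) :=
  Ideal.finiteQuotientOfFreeOfNeBot _ (by simpa using hz)

/-! ### The quartic character at a prime -/

/-- `z` is a prime of `ℤ[i]` of odd norm. -/
def OddPrime (z : GaussianInt) : Prop := Prime z ∧ IsCoprime z 2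

lemma norm_emod_four {z : GaussianInt} (h : IsCoprime z 2) : Zsqrtd.norm z % 4 = 1 := by
  obtain ⟨u, v, huv⟩ := h
  have h1 : Zsqrtd.norm u * Zsqrtd.norm z = Zsqrtd.norm (1 - v * 2) := by
    rw [← Zsqrtd.norm_mul, ← huv]; congr 1; ring
  have h2 : Zsqrtd.norm (1 - v * 2) % 2 = 1 := by
    simp only [Zsqrtd.norm_def, Zsqrtd.re_sub, Zsqrtd.im_sub, Zsqrtd.re_mul, Zsqrtd.im_mul,
      Zsqrtd.re_one, Zsqrtd.im_one, Zsqrtd.re_ofNat, Zsqrtd.im_ofNat]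
    ring_nf
    omega
  have h3 : Zsqrtd.norm z % 2 = 1 := by
    rw [← h1] at h2
    rcases Int.emod_two_eq_zero_or_one (Zsqrtd.norm z) with h | h
    · rw [Int.mul_emod, h] at h2; simp at h2
    · exact h
  rw [Zsqrtd.norm_def] at h3 ⊢
  obtain ⟨a, ha⟩ := Int.even_or_odd' z.re
  obtain ⟨b, hb⟩ := Int.even_or_odd' z.im
  rcases ha with ha | ha <;> rcases hb with hb | hb <;> rw [ha, hb] at h3 ⊢ <;> ring_nf at h3 ⊢ <;>
    omega

lemma OddPrime.five_le_norm {p : GaussianInt} (hp : OddPrime p) : 5 ≤ Zsqrtd.norm p := by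
  have h := norm_emod_four hp.2
  have h0 := GaussianInt.norm_nonneg p
  have h1 : Zsqrtd.norm p ≠ 1 := fun h1 =>
    hp.1.not_isUnit ((Zsqrtd.norm_eq_one_iff' (by norm_num) p).1 h1)
  omega

/-- The possible values of the quartic residue character. -/
def IsVal (u : GaussianInt) : Prop := u = 0 ∨ u = 1 ∨ u = gi ∨ u = -1 ∨ u = -gi

lemma IsVal.mul {u v : GaussianInt} (hu : IsVal u) (hv : IsVal v) : IsVal (u * v) := by
  have h : gi * gi = -1 := by decide
  rcases hu with rfl | rfl | rfl | rfl | rfl <;> rcases hv with rfl | rfl | rfl | rfl | rfl <;>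
    simp [IsVal, h]

/-- The possible values of the character are incongruent modulo every odd prime. -/
lemma IsVal.eq_of_dvd {p u v : GaussianInt} (hp : OddPrime p) (hu : IsVal u) (hv : IsVal v)
    (h : p ∣ u - v) : u = v := by
  by_contra hne
  have h5 := hp.five_le_norm
  have h1 : Zsqrtd.norm p ∣ Zsqrtd.norm (u - v) := by
    obtain ⟨c, hc⟩ := h
    rw [hc, Zsqrtd.norm_mul]; exact dvd_mul_right _ _
  have h2 := Int.le_of_dvd (GaussianInt.norm_pos.2 (sub_ne_zero.2 hne)) h1
  have h3 : Zsqrtd.norm (u - v) ≤ 4 := by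
    rcases hu with rfl | rfl | rfl | rfl | rfl <;> rcases hv with rfl | rfl | rfl | rfl | rfl <;>
      simp [gi, Zsqrtd.norm_def]
  omega

/-- The exponent `(N π - 1) / 4`. -/
def qexp (p : GaussianInt) : ℕ := ((Zsqrtd.norm p - 1) / 4).toNat

lemma OddPrime.qexp_mul {p : GaussianInt} (hp : OddPrime p) :
    qexp p * 4 = (Zsqrtd.norm p).natAbs - 1 := by
  have := norm_emod_four hp.2
  have := hp.five_le_norm
  unfold qexp
  omega

lemma OddPrime.qexp_pos {p : GaussianInt} (hp : OddPrime p) : 0 < qexp p := by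
  have := hp.qexp_mul
  have := hp.five_le_norm
  omega

/-- Fermat's little theorem in `ℤ[i]`. -/
lemma OddPrime.dvd_pow_sub_one {p a : GaussianInt} (hp : OddPrime p) (ha : ¬ p ∣ a) :
    p ∣ a ^ (qexp p * 4) - 1 := by
  have : Finite (GaussianInt ⧸ Ideal.span {p}) := finite_quot hp.1.ne_zero
  have : Fintype (GaussianInt ⧸ Ideal.span {p}) := Fintype.ofFinite _
  have : (Ideal.span {p}).IsMaximal := PrincipalIdealRing.isMaximal_of_irreducible hp.1.irreducible
  let _ : Field (GaussianInt ⧸ Ideal.span {p}) := Ideal.Quotient.field _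
  rw [← Ideal.mem_span_singleton, ← Ideal.Quotient.eq, map_pow, map_one, hp.qexp_mul, ← card_quot,
    Nat.card_eq_fintype_card]
  apply FiniteField.pow_card_sub_one_eq_one
  rw [Ne, Ideal.Quotient.eq_zero_iff_mem, Ideal.mem_span_singleton]
  exact ha

lemma OddPrime.exists_val {p a : GaussianInt} (hp : OddPrime p) (ha : ¬ p ∣ a) :
    ∃ u : GaussianInt, (u = 1 ∨ u = gi ∨ u = -1 ∨ u = -gi) ∧ p ∣ a ^ (qexp p) - u := by
  have h := hp.dvd_pow_sub_one ha
  have hgi : gi ^ 2 = -1 := by decide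
  have h2 : a ^ (qexp p * 4) - 1 = (a ^ qexp p - 1) * ((a ^ qexp p - gi) *
      ((a ^ qexp p - (-1)) * (a ^ qexp p - (-gi)))) := by
    rw [pow_mul]
    linear_combination (a ^ qexp p - 1) * (a ^ qexp p + 1) * hgi
  rw [h2] at h
  rcases hp.1.dvd_or_dvd h with h | h
  · exact ⟨_, Or.inl rfl, h⟩
  rcases hp.1.dvd_or_dvd h with h | h
  · exact ⟨_, Or.inr (Or.inl rfl), h⟩
  rcases hp.1.dvd_or_dvd h with h | h
  · exact ⟨_, Or.inr (Or.inr (Or.inl rfl)), h⟩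
  · exact ⟨_, Or.inr (Or.inr (Or.inr rfl)), h⟩

lemma OddPrime.char_spec {p : GaussianInt} (hp : OddPrime p) (a : GaussianInt) :
    IsVal (quarticCharPrime a p) ∧ p ∣ a ^ qexp p - quarticCharPrime a p := by
  unfold quarticCharPrime
  split_ifs with h
  · exact ⟨Or.inr h.choose_spec.1, h.choose_spec.2⟩
  · refine ⟨Or.inl rfl, ?_⟩
    by_contra hd
    refine h (hp.exists_val fun ha => hd ?_)
    rw [sub_zero]
    exact dvd_pow ha hp.qexp_pos.ne'

lemma OddPrime.char_eq {p a u : GaussianInt} (hp : OddPrime p) (hu : IsVal u)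
    (h : p ∣ a ^ qexp p - u) : quarticCharPrime a p = u := by
  obtain ⟨h1, h2⟩ := hp.char_spec a
  refine IsVal.eq_of_dvd hp h1 hu ?_
  simpa using dvd_sub h h2

lemma OddPrime.char_mul {p : GaussianInt} (hp : OddPrime p) (a b : GaussianInt) :
    quarticCharPrime (a * b) p = quarticCharPrime a p * quarticCharPrime b p := by
  obtain ⟨h1, h2⟩ := hp.char_spec a
  obtain ⟨h3, h4⟩ := hp.char_spec b
  refine hp.char_eq (h1.mul h3) ?_
  have : (a * b) ^ qexp p - quarticCharPrime a p * quarticCharPrime b p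
      = (a ^ qexp p - quarticCharPrime a p) * b ^ qexp p
        + quarticCharPrime a p * (b ^ qexp p - quarticCharPrime b p) := by
    rw [mul_pow]; ring
  rw [this]
  exact dvd_add (Dvd.dvd.mul_right h2 _) (Dvd.dvd.mul_left h4 _)

lemma OddPrime.char_one {p : GaussianInt} (hp : OddPrime p) : quarticCharPrime 1 p = 1 :=
  hp.char_eq (Or.inr (Or.inl rfl)) (by simp)

lemma OddPrime.char_congr {p a b : GaussianInt} (hp : OddPrime p) (h : p ∣ a - b) :
    quarticCharPrime a p = quarticCharPrime b p := by
  obtain ⟨h1, h2⟩ := hp.char_spec b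
  refine hp.char_eq h1 ?_
  have := dvd_add (h.trans (sub_dvd_pow_sub_pow a b (qexp p))) h2
  simpa using this

lemma OddPrime.char_zero {p a : GaussianInt} (hp : OddPrime p) (h : p ∣ a) :
    quarticCharPrime a p = 0 :=
  hp.char_eq (Or.inl rfl) (by rw [sub_zero]; exact dvd_pow h hp.qexp_pos.ne')

/-- The quartic character at an odd prime is nontrivial: `ℤ[i]/π` has a primitive root, whose order
`N π - 1` exceeds `(N π - 1) / 4`. -/
lemma OddPrime.exists_char_ne_one {p : GaussianInt} (hp : OddPrime p) :
    ∃ a : GaussianInt, ¬ p ∣ a ∧ quarticCharPrime a p ≠ 1 := by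
  have : Finite (GaussianInt ⧸ Ideal.span {p}) := finite_quot hp.1.ne_zero
  have : Fintype (GaussianInt ⧸ Ideal.span {p}) := Fintype.ofFinite _
  have : (Ideal.span {p}).IsMaximal := PrincipalIdealRing.isMaximal_of_irreducible hp.1.irreducible
  let _ : Field (GaussianInt ⧸ Ideal.span {p}) := Ideal.Quotient.field _
  obtain ⟨g, hg⟩ := IsCyclic.exists_ofOrder_eq_natCard (α := (GaussianInt ⧸ Ideal.span {p})ˣ)
  obtain ⟨a, ha⟩ := Ideal.Quotient.mk_surjective (g : GaussianInt ⧸ Ideal.span {p})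
  refine ⟨a, fun h => ?_, fun h => ?_⟩
  · rw [← Ideal.mem_span_singleton, ← Ideal.Quotient.eq_zero_iff_mem, ha] at h
    exact g.ne_zero h
  · have h1 := (hp.char_spec a).2
    rw [h, ← Ideal.mem_span_singleton, ← Ideal.Quotient.eq, map_pow, map_one, ha] at h1
    have h2 : g ^ qexp p = 1 := by ext; simpa using h1
    have h3 := Nat.le_of_dvd hp.qexp_pos (orderOf_dvd_of_pow_eq_one h2)
    rw [hg, Nat.card_units, card_quot, ← hp.qexp_mul] at h3
    have := hp.qexp_pos
    omega

/-! ### The quartic symbol for a general modulus -/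

/-- `n` is nonzero and coprime to `2`. -/
def OddMod (n : GaussianInt) : Prop := n ≠ 0 ∧ IsCoprime n 2

open UniqueFactorizationMonoid in
lemma OddMod.oddPrime {n p : GaussianInt} (hn : OddMod n) (hp : p ∈ factors n) : OddPrime p :=
  ⟨prime_of_factor p hp, hn.2.of_isCoprime_of_dvd_left (dvd_of_mem_factors hp)⟩

lemma OddMod.symbol_mul {n : GaussianInt} (hn : OddMod n) (a b : GaussianInt) :
    quarticSymbol (a * b) n = quarticSymbol a n * quarticSymbol b n := by
  unfold quarticSymbol
  rw [← map_mul, ← Multiset.prod_map_mul]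
  congr 2
  exact Multiset.map_congr rfl fun p hp => (hn.oddPrime hp).char_mul a b

lemma OddMod.symbol_one {n : GaussianInt} (hn : OddMod n) : quarticSymbol 1 n = 1 := by
  unfold quarticSymbol
  rw [Multiset.map_congr rfl fun p hp => (hn.oddPrime hp).char_one]
  simp

open UniqueFactorizationMonoid in
lemma OddMod.symbol_congr {n a b : GaussianInt} (hn : OddMod n) (h : n ∣ a - b) :
    quarticSymbol a n = quarticSymbol b n := by
  unfold quarticSymbol
  congr 2
  exact Multiset.map_congr rfl fun p hp =>
    (hn.oddPrime hp).char_congr ((dvd_of_mem_factors hp).trans h)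

open UniqueFactorizationMonoid in
lemma OddMod.symbol_zero {n a : GaussianInt} (hn : OddMod n) (h : ¬ IsCoprime a n) :
    quarticSymbol a n = 0 := by
  obtain ⟨p, hp, hpa⟩ : ∃ p ∈ factors n, p ∣ a := by
    by_contra! hcon
    refine h (IsCoprime.symm ?_)
    have h1 : IsCoprime (factors n).prod a := by
      have : ∀ s : Multiset GaussianInt, (∀ p ∈ s, IsCoprime p a) → IsCoprime s.prod a := by
        intro s
        induction s using Multiset.induction with
        | empty => simp [isCoprime_one_left]
        | cons b s ih =>
          intro hs
          rw [Multiset.prod_cons]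
          exact IsCoprime.mul_left (hs b (Multiset.mem_cons_self b s))
            (ih fun p hp => hs p (Multiset.mem_cons_of_mem hp))
      exact this _ fun p hp =>
        (hn.oddPrime hp).1.irreducible.coprime_iff_not_dvd.2 (hcon p hp)
    exact h1.of_isCoprime_of_dvd_left (factors_prod hn.1).symm.dvd
  unfold quarticSymbol
  rw [Multiset.prod_eq_zero, map_zero]
  exact Multiset.mem_map.2 ⟨p, hp, (hn.oddPrime hp).char_zero hpa⟩

lemma IsVal.mul_star {u : GaussianInt} (hu : IsVal u) (h0 : u ≠ 0) :
    GaussianInt.toComplex u * star (GaussianInt.toComplex u) = 1 := by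
  rcases hu with rfl | rfl | rfl | rfl | rfl
  · exact absurd rfl h0
  all_goals simp [gi, GaussianInt.toComplex_def]

open UniqueFactorizationMonoid in
lemma OddMod.symbol_mul_star {n a : GaussianInt} (hn : OddMod n) (h : IsCoprime a n) :
    quarticSymbol a n * star (quarticSymbol a n) = 1 := by
  have hval : ∀ s : Multiset GaussianInt, (∀ p ∈ s, OddPrime p) →
      IsVal (s.map (quarticCharPrime a)).prod := by
    intro s
    induction s using Multiset.induction with
    | empty => intro _; right; left; simp
    | cons b s ih =>
      intro hs
      rw [Multiset.map_cons, Multiset.prod_cons]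
      exact ((hs b (Multiset.mem_cons_self b s)).char_spec a).1.mul
        (ih fun p hp => hs p (Multiset.mem_cons_of_mem hp))
  refine (hval _ fun p hp => hn.oddPrime hp).mul_star ?_
  rw [Ne, Multiset.prod_eq_zero_iff, Multiset.mem_map]
  rintro ⟨p, hp, h0⟩
  have h1 := ((hn.oddPrime hp).char_spec a).2
  rw [h0, sub_zero] at h1
  have h2 := (hn.oddPrime hp).1.dvd_of_dvd_pow h1
  exact (hn.oddPrime hp).1.not_isUnit (h.isUnit_of_dvd' h2 (dvd_of_mem_factors hp))

open UniqueFactorizationMonoid in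
/-- Primitivity of the symbol modulo a squarefree `n`: if `k` is not coprime to `n`, some `c` coprime
to `n` has nontrivial symbol although multiplication by `c` fixes `k` modulo `n`. -/
lemma OddMod.exists_primitive {n k : GaussianInt} (hn : OddMod n) (hsq : Squarefree n)
    (h : ¬ IsCoprime k n) :
    ∃ c, IsCoprime c n ∧ n ∣ k * (c - 1) ∧ quarticSymbol c n ≠ 1 := by
  obtain ⟨p, hp, hpk⟩ : ∃ p ∈ factors n, p ∣ k := by
    by_contra! hcon
    apply h
    by_contra hk
    obtain ⟨z, hz, -, hzk, hzn⟩ : ∃ z, Prime z ∧ z ≠ 0 ∧ z ∣ k ∧ z ∣ n := by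
      by_contra! hz
      exact hk (isCoprime_of_prime_dvd (fun h0 => hn.1 h0.2)
        fun w hw hwk hwn => hz w hw hw.ne_zero hwk hwn)
    obtain ⟨p, hp, hzp⟩ := exists_mem_factors_of_dvd hn.1 hz.irreducible hzn
    exact hcon p hp (hzp.symm.dvd.trans hzk)
  have hpo := hn.oddPrime hp
  obtain ⟨t, ht⟩ := Multiset.exists_cons_of_mem hp
  have hassoc : Associated (p * t.prod) n := by
    have := factors_prod hn.1
    rwa [ht, Multiset.prod_cons] at this
  have hcop : IsCoprime p t.prod := by
    rw [hpo.1.irreducible.coprime_iff_not_dvd]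
    intro hd
    exact hpo.1.not_isUnit (hsq p ((mul_dvd_mul_left p hd).trans hassoc.dvd))
  obtain ⟨g, hg0, hg1⟩ := hpo.exists_char_ne_one
  obtain ⟨u, v, huv⟩ := hcop
  -- By the Chinese remainder theorem, `c ≡ g` modulo `p` and `c ≡ 1` modulo the cofactor
  set c := u * p + v * t.prod * g with hc
  have hcg : p ∣ c - g := ⟨u - u * g, by rw [hc]; linear_combination g * huv⟩
  have hc1 : t.prod ∣ c - 1 := ⟨v * g - v, by rw [hc]; linear_combination huv⟩
  have hchar : ∀ q ∈ t, quarticCharPrime c q = 1 := fun q hq => by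
    have hqo := hn.oddPrime (p := q) (by rw [ht]; exact Multiset.mem_cons_of_mem hq)
    rw [hqo.char_congr ((Multiset.dvd_prod hq).trans hc1), hqo.char_one]
  refine ⟨c, ?_, ?_, ?_⟩
  · have h1 : IsCoprime p c := by
      rw [hpo.1.irreducible.coprime_iff_not_dvd]
      intro hd
      exact hg0 (by simpa using dvd_sub hd hcg)
    have h2 : IsCoprime t.prod c := by
      obtain ⟨d, hd⟩ := hc1
      exact ⟨-d, 1, by linear_combination hd⟩
    exact ((h1.mul_left h2).of_isCoprime_of_dvd_left hassoc.symm.dvd).symm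
  · exact hassoc.symm.dvd.trans (mul_dvd_mul hpk hc1)
  · unfold quarticSymbol
    rw [ht, Multiset.map_cons, Multiset.prod_cons, Multiset.map_congr rfl hchar,
      hpo.char_congr hcg]
    intro h1
    apply hg1
    rw [← GaussianInt.toComplex_inj]
    simpa using h1

/-! ### Gauss sums -/

lemma etilde_add (z w : ℂ) : etilde (z + w) = etilde z * etilde w := by
  unfold etilde
  rw [← Complex.exp_add, star_add]
  congr 1; ring

lemma etilde_int (z : GaussianInt) : etilde (GaussianInt.toComplex z) = 1 := by
  unfold etilde
  rw [Complex.exp_eq_one_iff]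
  refine ⟨2 * z.re, ?_⟩
  rw [GaussianInt.toComplex_def]
  simp
  ring

lemma star_etilde (z : ℂ) : star (etilde z) = etilde (-z) := by
  unfold etilde
  rw [Complex.star_def, ← Complex.exp_conj]
  congr 1
  simp [Complex.conj_ofNat]
  ring

/-- The sum over residue classes modulo `n` of a function on `ℤ[i]`, evaluated at chosen
representatives. -/
def resSum (n : GaussianInt) (f : GaussianInt → ℂ) : ℂ :=
  ∑' x : GaussianInt ⧸ Ideal.span {n}, f (Quotient.out x)

lemma dvd_out_sub (n a : GaussianInt) :
    n ∣ Quotient.out (Ideal.Quotient.mk (Ideal.span {n}) a) - a := by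
  rw [← Ideal.mem_span_singleton, ← Ideal.Quotient.eq]
  exact Quotient.out_eq _

lemma mk_out (n : GaussianInt) (x : GaussianInt ⧸ Ideal.span {n}) :
    Ideal.Quotient.mk (Ideal.span {n}) (Quotient.out x) = x := Quotient.out_eq x

lemma mk_eq_iff {n a b : GaussianInt} :
    Ideal.Quotient.mk (Ideal.span {n}) a = Ideal.Quotient.mk (Ideal.span {n}) b ↔ n ∣ a - b := by
  rw [Ideal.Quotient.eq, Ideal.mem_span_singleton]

/-- Multiplication by `c` coprime to `n` permutes the residue classes modulo `n`. -/
lemma resSum_mul {n c : GaussianInt} (hc : IsCoprime c n) {f : GaussianInt → ℂ}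
    (hf : ∀ a b, n ∣ a - b → f a = f b) : resSum n (fun x => f (c * x)) = resSum n f := by
  have hbij : Function.Bijective (fun x : GaussianInt ⧸ Ideal.span {n} =>
      Ideal.Quotient.mk (Ideal.span {n}) (c * Quotient.out x)) := by
    obtain ⟨u, v, huv⟩ := hc
    constructor
    · intro x y hxy
      rw [← mk_out n x, ← mk_out n y, mk_eq_iff]
      obtain ⟨d, hd⟩ := mk_eq_iff.1 hxy
      exact ⟨u * d + v * (Quotient.out x - Quotient.out y), by
        linear_combination u * hd - (Quotient.out x - Quotient.out y) * huv⟩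
    · intro y
      refine ⟨Ideal.Quotient.mk _ (u * Quotient.out y), ?_⟩
      dsimp only
      conv_rhs => rw [← mk_out n y]
      rw [mk_eq_iff]
      obtain ⟨d, hd⟩ := dvd_out_sub n (u * Quotient.out y)
      exact ⟨c * d - v * Quotient.out y, by
        linear_combination c * hd + (Quotient.out y) * huv⟩
  unfold resSum
  refine Eq.trans (tsum_congr fun x => hf _ _ ?_)
    ((Equiv.ofBijective _ hbij).tsum_eq (fun x => f (Quotient.out x)))
  rw [dvd_sub_comm]
  exact dvd_out_sub _ _

/-- The twisted Gauss sum `Σ_{x mod n} (x/n)₄ ẽ(kx/n)`. -/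
def twGauss (n k : GaussianInt) : ℂ :=
  resSum n fun x => quarticSymbol x n *
    etilde (GaussianInt.toComplex (k * x) / GaussianInt.toComplex n)

lemma etilde_congr {n a b : GaussianInt} (hn : n ≠ 0) (h : n ∣ a - b) :
    etilde (GaussianInt.toComplex a / GaussianInt.toComplex n) =
      etilde (GaussianInt.toComplex b / GaussianInt.toComplex n) := by
  obtain ⟨d, hd⟩ := h
  have hn' : GaussianInt.toComplex n ≠ 0 := by simpa using hn
  have : GaussianInt.toComplex a / GaussianInt.toComplex n =
      GaussianInt.toComplex b / GaussianInt.toComplex n + GaussianInt.toComplex d := by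
    rw [sub_eq_iff_eq_add.1 hd, map_add, map_mul]
    field_simp
    ring
  rw [this, etilde_add, etilde_int, mul_one]

lemma OddMod.twGauss_congr {n k a b : GaussianInt} (hn : OddMod n) (h : n ∣ a - b) :
    quarticSymbol a n * etilde (GaussianInt.toComplex (k * a) / GaussianInt.toComplex n) =
    quarticSymbol b n * etilde (GaussianInt.toComplex (k * b) / GaussianInt.toComplex n) := by
  rw [hn.symbol_congr h, etilde_congr hn.1 (a := k * a) (b := k * b)]
  rw [← mul_sub]
  exact Dvd.dvd.mul_left h _

/-- The symbol is a primitive character: the twist by `k` multiplies the Gauss sum by the conjugate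
of `(k/n)₄`, including when `k` is not coprime to `n`. -/
lemma OddMod.twGauss_eq {n : GaussianInt} (hn : OddMod n) (hsq : Squarefree n) (k : GaussianInt) :
    twGauss n k = star (quarticSymbol k n) * gaussSum4 n := by
  have hg : gaussSum4 n = twGauss n 1 := by
    simp only [gaussSum4, twGauss, resSum, one_mul]
  by_cases hk : IsCoprime k n
  · rw [hg, twGauss, twGauss, ← resSum_mul hk fun a b => hn.twGauss_congr (k := 1)]
    simp only [resSum, ← tsum_mul_left]
    refine tsum_congr fun x => ?_
    rw [hn.symbol_mul, one_mul]
    linear_combination (-(quarticSymbol (Quotient.out x) n) *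
      etilde (GaussianInt.toComplex (k * Quotient.out x) / GaussianInt.toComplex n)) *
      hn.symbol_mul_star hk
  · rw [hn.symbol_zero hk, star_zero, zero_mul]
    obtain ⟨c, hc, hkc, hc1⟩ := hn.exists_primitive hsq hk
    have h : twGauss n k = quarticSymbol c n * twGauss n k := by
      conv_lhs => rw [twGauss, ← resSum_mul hc fun a b => hn.twGauss_congr]
      rw [twGauss]
      simp only [resSum, ← tsum_mul_left]
      refine tsum_congr fun x => ?_
      rw [hn.symbol_mul, etilde_congr hn.1 (a := k * (c * Quotient.out x)) (b := k * Quotient.out x),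
        mul_assoc]
      convert Dvd.dvd.mul_right hkc (Quotient.out x) using 1
      ring
    have h2 : (quarticSymbol c n - 1) * twGauss n k = 0 := by linear_combination -h
    exact (mul_eq_zero.1 h2).resolve_left (sub_ne_zero.2 hc1)

/-- The conjugate version: `Σ_{x mod n} conj (x/n)₄ ẽ(kx/n) = (-1/n)₄ (k/n)₄ conj g(n)`. -/
lemma OddMod.twGauss_star {n : GaussianInt} (hn : OddMod n) (hsq : Squarefree n)
    (k : GaussianInt) :
    (resSum n fun x => star (quarticSymbol x n) *
      etilde (GaussianInt.toComplex (k * x) / GaussianInt.toComplex n)) =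
    quarticSymbol (-1) n * quarticSymbol k n * star (gaussSum4 n) := by
  have h := congrArg star (hn.twGauss_eq hsq (-k))
  rw [star_mul', star_star, ← neg_one_mul k, hn.symbol_mul] at h
  rw [← h, twGauss, resSum, resSum]
  have : Finite (GaussianInt ⧸ Ideal.span {n}) := finite_quot hn.1
  have : Fintype (GaussianInt ⧸ Ideal.span {n}) := Fintype.ofFinite _
  rw [tsum_fintype, tsum_fintype, star_sum]
  refine Finset.sum_congr rfl fun x _ => ?_
  rw [star_mul', star_etilde]
  congr 2
  simp only [map_mul, map_neg, map_one]
  ring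

/-- The character `χ(m) = (m/n₁)₄ conj (m/n₂)₄`. -/
def chi (n₁ n₂ m : GaussianInt) : ℂ := quarticSymbol m n₁ * star (quarticSymbol m n₂)

/-- Evaluation of the complete sum produced by Poisson summation: the substitution
`a = -2i (n₂ x + n₁ y)` splits it into Gauss sums modulo `n₁` and `n₂`. -/
lemma complete_sum {n₁ n₂ : GaussianInt} (h₁ : OddMod n₁) (h₂ : OddMod n₂)
    (hs₁ : Squarefree n₁) (hs₂ : Squarefree n₂) (hcop : IsCoprime n₁ n₂) (k : GaussianInt) :
    (resSum (n₁ * n₂) fun a => chi n₁ n₂ a *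
      etilde (-(GaussianInt.toComplex (k * a) /
        (2 * Complex.I * GaussianInt.toComplex (n₁ * n₂))))) =
    chi n₁ n₂ (-2 * gi) * quarticSymbol n₂ n₁ * star (quarticSymbol n₁ n₂) *
      (star (quarticSymbol k n₁) * gaussSum4 n₁) *
      (quarticSymbol (-1) n₂ * quarticSymbol k n₂ * star (gaussSum4 n₂)) := by
  have hgi : gi * gi = -1 := by decide
  have h2q : IsCoprime (-2 * gi) (n₁ * n₂) := by
    have h := (h₁.2.mul_left h₂.2).symm
    obtain ⟨u, v, huv⟩ := h
    exact ⟨u * gi, v, by linear_combination huv - 2 * u * hgi⟩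
  have hper : ∀ a b, n₁ * n₂ ∣ a - b → chi n₁ n₂ a = chi n₁ n₂ b := fun a b h => by
    rw [chi, chi, h₁.symbol_congr ((dvd_mul_right _ _).trans h),
      h₂.symbol_congr ((dvd_mul_left _ _).trans h)]
  have hchimul : ∀ a b, chi n₁ n₂ (a * b) = chi n₁ n₂ a * chi n₁ n₂ b := fun a b => by
    simp only [chi, h₁.symbol_mul, h₂.symbol_mul, star_mul']; ring
  have hc₁ : GaussianInt.toComplex n₁ ≠ 0 := by simpa using h₁.1
  have hc₂ : GaussianInt.toComplex n₂ ≠ 0 := by simpa using h₂.1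
  have hperE : ∀ a b, n₁ * n₂ ∣ a - b →
      etilde (-(GaussianInt.toComplex (k * a) /
        (2 * Complex.I * GaussianInt.toComplex (n₁ * n₂)))) =
      etilde (-(GaussianInt.toComplex (k * b) /
        (2 * Complex.I * GaussianInt.toComplex (n₁ * n₂)))) := fun a b h => by
    obtain ⟨d, hd⟩ := h
    have : -(GaussianInt.toComplex (k * a) / (2 * Complex.I * GaussianInt.toComplex (n₁ * n₂))) =
      -(GaussianInt.toComplex (k * b) / (2 * Complex.I * GaussianInt.toComplex (n₁ * n₂))) +
        -(GaussianInt.toComplex (k * d) / (2 * Complex.I)) := by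
      rw [sub_eq_iff_eq_add.1 hd]
      simp only [map_mul, map_add]
      field_simp
      ring
    rw [this, etilde_add]
    have h1 : etilde (-(GaussianInt.toComplex (k * d) / (2 * Complex.I))) = 1 := by
      unfold etilde
      rw [Complex.exp_eq_one_iff]
      refine ⟨-(k * d).im, ?_⟩
      rw [GaussianInt.toComplex_def, mul_comm 2 Complex.I, ← div_div, div_eq_mul_inv _ Complex.I,
        Complex.inv_I]
      simp
      ring_nf
      simp
      ring
    rw [h1, mul_one]
  rw [← resSum_mul h2q fun a b h => by rw [hper a b h, hperE a b h]]
  have hf₁ : Finite (GaussianInt ⧸ Ideal.span {n₁}) := finite_quot h₁.1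
  have hf₂ : Finite (GaussianInt ⧸ Ideal.span {n₂}) := finite_quot h₂.1
  have : Finite (GaussianInt ⧸ Ideal.span {n₁ * n₂}) := finite_quot (mul_ne_zero h₁.1 h₂.1)
  have : Fintype (GaussianInt ⧸ Ideal.span {n₁}) := Fintype.ofFinite _
  have : Fintype (GaussianInt ⧸ Ideal.span {n₂}) := Fintype.ofFinite _
  have hbij : Function.Bijective
      (fun x : (GaussianInt ⧸ Ideal.span {n₁}) × (GaussianInt ⧸ Ideal.span {n₂}) =>
      Ideal.Quotient.mk (Ideal.span {n₁ * n₂})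
        (n₂ * Quotient.out x.1 + n₁ * Quotient.out x.2)) := by
    obtain ⟨u, v, huv⟩ := id hcop
    constructor
    · rintro ⟨x, y⟩ ⟨x', y'⟩ hxy
      have h := mk_eq_iff.1 hxy
      dsimp only at h
      obtain ⟨d, hd⟩ := h
      ext
      · dsimp only
        rw [← mk_out n₁ x, ← mk_out n₁ x', mk_eq_iff]
        refine hcop.dvd_of_dvd_mul_left (?_ : n₁ ∣ n₂ * _)
        exact ⟨n₂ * d - (Quotient.out y - Quotient.out y'), by linear_combination hd⟩
      · dsimp only
        rw [← mk_out n₂ y, ← mk_out n₂ y', mk_eq_iff]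
        refine hcop.symm.dvd_of_dvd_mul_left (?_ : n₂ ∣ n₁ * _)
        exact ⟨n₁ * d - (Quotient.out x - Quotient.out x'), by linear_combination hd⟩
    · intro z
      refine ⟨(Ideal.Quotient.mk _ (v * Quotient.out z), Ideal.Quotient.mk _ (u * Quotient.out z)),
        ?_⟩
      dsimp only
      conv_rhs => rw [← mk_out _ z]
      rw [mk_eq_iff]
      obtain ⟨d, hd⟩ := dvd_out_sub n₁ (v * Quotient.out z)
      obtain ⟨e, he⟩ := dvd_out_sub n₂ (u * Quotient.out z)
      exact ⟨d + e, by linear_combination n₂ * hd + n₁ * he + Quotient.out z * huv⟩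
  have hchi : ∀ x y, chi n₁ n₂ (n₂ * x + n₁ * y) =
      quarticSymbol n₂ n₁ * star (quarticSymbol n₁ n₂) *
        (quarticSymbol x n₁ * star (quarticSymbol y n₂)) := fun x y => by
    rw [chi, h₁.symbol_congr (a := n₂ * x + n₁ * y) (b := n₂ * x) ⟨y, by ring⟩,
      h₂.symbol_congr (a := n₂ * x + n₁ * y) (b := n₁ * y) ⟨x, by ring⟩,
      h₁.symbol_mul, h₂.symbol_mul, star_mul']
    ring
  have hsplit : ∀ x y, etilde (-(GaussianInt.toComplex (k * (-2 * gi * (n₂ * x + n₁ * y))) /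
        (2 * Complex.I * GaussianInt.toComplex (n₁ * n₂)))) =
      etilde (GaussianInt.toComplex (k * x) / GaussianInt.toComplex n₁) *
      etilde (GaussianInt.toComplex (k * y) / GaussianInt.toComplex n₂) := fun x y => by
    rw [← etilde_add]
    congr 1
    have hI : GaussianInt.toComplex gi = Complex.I := by simp [gi, GaussianInt.toComplex_def]
    simp only [map_mul, map_add, map_neg, hI, map_ofNat]
    field_simp
  rw [← h₁.twGauss_eq hs₁ k, ← h₂.twGauss_star hs₂ k, resSum,
    ← (Equiv.ofBijective _ hbij).tsum_eq]
  simp only [twGauss, resSum]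
  rw [tsum_fintype, tsum_fintype, tsum_fintype, Fintype.sum_prod_type]
  conv_rhs => rw [mul_assoc, Finset.sum_mul_sum, Finset.mul_sum]
  refine Finset.sum_congr rfl fun x _ => ?_
  rw [Finset.mul_sum]
  refine Finset.sum_congr rfl fun y _ => ?_
  simp only [Equiv.ofBijective_apply]
  have hd := dvd_out_sub (n₁ * n₂) (n₂ * Quotient.out x + n₁ * Quotient.out y)
  rw [hchimul, hper _ _ hd, hchi,
    hperE (-2 * gi * _) (-2 * gi * (n₂ * Quotient.out x + n₁ * Quotient.out y))
    (by rw [← mul_sub]; exact Dvd.dvd.mul_left hd _), hsplit]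
  ring

/-! ### Poisson summation on `ℤ[i]` -/

open scoped FourierTransform ContDiff RealInnerProductSpace SchwartzMap

open MeasureTheory

lemma integral_complex_eq {g : ℂ → ℂ} (hg : Integrable g) :
    ∫ z, g z = ∫ x : ℝ, ∫ y : ℝ, g (x + y * Complex.I) := by
  have hmp := Complex.volume_preserving_equiv_real_prod.symm
  have h1 : Integrable (fun p : ℝ × ℝ => g (Complex.measurableEquivRealProd.symm p)) :=
    (hmp.integrable_comp_emb (MeasurableEquiv.measurableEmbedding _)).2 hg
  rw [← hmp.integral_comp' g, Measure.volume_eq_prod, integral_prod _ h1]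
  simp only [Complex.measurableEquivRealProd_symm_apply, Complex.mk_eq_add_mul_I]

lemma summable_one_add_sq : Summable fun a : ℤ => (1 + (a : ℝ) ^ 2)⁻¹ := by
  refine Summable.of_norm_bounded_eventually
    (g := fun a : ℤ => 1 / (a : ℝ) ^ 2) (Real.summable_one_div_int_pow.2 one_lt_two) ?_
  refine (Set.finite_singleton (0 : ℤ)).subset fun a ha => ?_
  by_contra h0
  apply ha
  have ha0 : (0 : ℝ) < (a : ℝ) ^ 2 := by
    have : (a : ℝ) ≠ 0 := by exact_mod_cast h0
    positivity
  change ‖(1 + (a : ℝ) ^ 2)⁻¹‖ ≤ 1 / (a : ℝ) ^ 2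
  rw [Real.norm_of_nonneg (by positivity), one_div]
  gcongr
  linarith

/-- A Schwartz function on `ℂ` is summable over the lattice `ℤ[i]`. -/
lemma schwartz_summable (f : 𝓢(ℂ, ℂ)) :
    Summable fun p : ℤ × ℤ => f (p.1 + p.2 * Complex.I) := by
  obtain ⟨C, hC⟩ : ∃ C : ℝ, ∀ z : ℂ, (1 + ‖z‖) ^ 4 * ‖f z‖ ≤ C := by
    refine ⟨2 ^ 4 * (Finset.Iic ((4, 0) : ℕ × ℕ)).sup
      (fun m => SchwartzMap.seminorm ℝ m.1 m.2) f, fun z => ?_⟩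
    have := SchwartzMap.one_add_le_sup_seminorm_apply (𝕜 := ℝ) (m := (4, 0)) (k := 4) (n := 0)
      le_rfl le_rfl f z
    rwa [norm_iteratedFDeriv_zero] at this
  refine Summable.of_norm_bounded
    (g := fun p : ℤ × ℤ => C * ((1 + (p.1 : ℝ) ^ 2)⁻¹ * (1 + (p.2 : ℝ) ^ 2)⁻¹))
    ((summable_one_add_sq.mul_of_nonneg summable_one_add_sq (fun a => by positivity)
      (fun a => by positivity)).mul_left C) ?_
  rintro ⟨a, b⟩
  dsimp only
  have h := hC (a + b * Complex.I)
  have hn : ‖(a + b * Complex.I : ℂ)‖ ^ 2 = (a : ℝ) ^ 2 + (b : ℝ) ^ 2 := by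
    rw [← Complex.normSq_eq_norm_sq]
    simp [Complex.normSq_apply]; ring
  have h0 := norm_nonneg (a + b * Complex.I : ℂ)
  set r := ‖(a + b * Complex.I : ℂ)‖
  have h1 : (1 + (a : ℝ) ^ 2) * (1 + (b : ℝ) ^ 2) ≤ (1 + r) ^ 4 := by
    have : (1 + r) ^ 4 = (1 + r ^ 2 + 2 * r) ^ 2 := by ring
    rw [this, hn]
    nlinarith [sq_nonneg (a : ℝ), sq_nonneg (b : ℝ), mul_nonneg (sq_nonneg (a : ℝ)) h0,
      mul_nonneg (sq_nonneg (b : ℝ)) h0, sq_nonneg ((a : ℝ) ^ 2), sq_nonneg ((b : ℝ) ^ 2),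
      mul_nonneg (sq_nonneg (a : ℝ)) (sq_nonneg (b : ℝ))]
  rw [← mul_inv, ← div_eq_mul_inv, le_div_iff₀ (by positivity), mul_comm]
  exact (mul_le_mul_of_nonneg_right h1 (norm_nonneg _)).trans h

lemma isBigO_of_hasCompactSupport {f : ℝ → ℂ} (hf : HasCompactSupport f) (g : ℝ → ℝ) :
    f =O[Filter.cocompact ℝ] g := by
  rw [hasCompactSupport_iff_eventuallyEq, Filter.coclosedCompact_eq_cocompact] at hf
  exact hf.trans_isBigO (Asymptotics.isBigO_zero _ _)

/-- Poisson summation for `ℤ² ⊆ ℂ`, obtained by applying the one-dimensional formula first in the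
imaginary direction and then in the real direction. -/
lemma poisson_prod {F : ℂ → ℂ} (hF : ContDiff ℝ ∞ F) (hc : HasCompactSupport F) :
    ∑' p : ℤ × ℤ, F (p.1 + p.2 * Complex.I) = ∑' p : ℤ × ℤ, 𝓕 F (p.1 + p.2 * Complex.I) := by
  set S : 𝓢(ℂ, ℂ) := hc.toSchwartzMap hF
  have hS : ⇑S = F := rfl
  have hG : Summable fun p : ℤ × ℤ => 𝓕 F (p.1 + p.2 * Complex.I) := schwartz_summable (𝓕 S)
  have hFs : Summable fun p : ℤ × ℤ => F (p.1 + p.2 * Complex.I) := schwartz_summable S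
  obtain ⟨R, hR⟩ : ∃ R : ℝ, ∀ z, R < ‖z‖ → F z = 0 := by
    obtain ⟨R, hR⟩ := hc.isCompact.isBounded.subset_closedBall 0
    refine ⟨R, fun z hz => ?_⟩
    by_contra h0
    have := hR (subset_tsupport F h0)
    rw [mem_closedBall_zero_iff] at this
    linarith
  have hx : ∀ x y : ℝ, R < |x| → F (x + y * Complex.I) = 0 := fun x y h =>
    hR _ (h.trans_le (by simpa using Complex.abs_re_le_norm (x + y * Complex.I)))
  have hy : ∀ x y : ℝ, R < |y| → F (x + y * Complex.I) = 0 := fun x y h =>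
    hR _ (h.trans_le (by simpa using Complex.abs_im_le_norm (x + y * Complex.I)))
  have hfc : ∀ x : ℝ, HasCompactSupport fun y : ℝ => F (x + y * Complex.I) := fun x =>
    HasCompactSupport.intro (isCompact_Icc (a := -R) (b := R)) fun y h => hy x y (by
      by_contra h'; exact h (abs_le.1 (not_lt.1 h')))
  have hfs : ∀ x : ℝ, ContDiff ℝ ∞ fun y : ℝ => F (x + y * Complex.I) := fun x =>
    hF.comp (contDiff_const.add (Complex.ofRealCLM.contDiff.mul contDiff_const))
  -- `H l` is the partial Fourier transform of `F` in the imaginary direction at frequency `l`.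
  set H : ℝ → ℝ → ℂ := fun l x => 𝓕 (fun y : ℝ => F (x + y * Complex.I)) l with hH
  have hHc : ∀ l, HasCompactSupport (H l) := fun l =>
    HasCompactSupport.intro (isCompact_Icc (a := -R) (b := R)) fun x h => by
      have h' : R < |x| := by
        by_contra h'; exact h (abs_le.1 (not_lt.1 h'))
      simp only [hH, Real.fourier_real_eq, hx x _ h', smul_zero, integral_zero]
  have hHcont : ∀ l, Continuous (H l) := fun l => by
    simp only [hH, Real.fourier_real_eq]
    rw [← continuousOn_univ]
    refine continuousOn_integral_of_compact_support (isCompact_Icc (a := -R) (b := R)) ?_ ?_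
    · refine Continuous.continuousOn ?_
      have := hF.continuous
      have := Real.continuous_fourierChar
      simp only [Function.uncurry_def]
      fun_prop
    · intro x y _ h
      rw [hy x y (by by_contra h'; exact h (abs_le.1 (not_lt.1 h'))), smul_zero]
  have hHF : ∀ l ξ : ℝ, 𝓕 (H l) ξ = 𝓕 F (ξ + l * Complex.I) := fun l ξ => by
    have hgint : Integrable fun z : ℂ => Real.fourierChar (-⟪z, ξ + l * Complex.I⟫) • F z :=
      (Real.fourierIntegral_convergent_iff _).2 S.integrable
    rw [Real.fourier_eq F, integral_complex_eq hgint, Real.fourier_real_eq]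
    refine integral_congr_ae (Filter.Eventually.of_forall fun x => ?_)
    simp only [hH, Real.fourier_real_eq, Circle.smul_def]
    rw [← integral_smul]
    refine integral_congr_ae (Filter.Eventually.of_forall fun y => ?_)
    dsimp only
    rw [smul_smul, ← Circle.coe_mul, ← AddChar.map_add_eq_mul]
    congr 3
    simp [Complex.inner]
    ring
  have hHsum : ∀ m : ℤ, Summable fun l : ℤ => H l m := fun m =>
    summable_of_isBigO (Real.summable_abs_int_rpow one_lt_two)
      (((𝓕 ((hfc m).toSchwartzMap (hfs m))).isBigO_cocompact_rpow (-2)).norm_left.comp_tendsto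
        Int.tendsto_coe_cofinite).of_norm_left
  have h1 : ∀ m : ℤ, ∑' n : ℤ, F (m + n * Complex.I) = ∑' l : ℤ, H l m := fun m => by
    have := SchwartzMap.tsum_eq_tsum_fourier ((hfc m).toSchwartzMap (hfs m)) 0
    simp only [QuotientAddGroup.mk_zero, fourier_eval_zero, mul_one, zero_add] at this
    exact_mod_cast this
  have h2 : ∀ l : ℤ, ∑' m : ℤ, H l m = ∑' k : ℤ, 𝓕 F (k + l * Complex.I) := fun l => by
    have := Real.tsum_eq_tsum_fourier_of_rpow_decay_of_summable (hHcont l) one_lt_two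
      (isBigO_of_hasCompactSupport (hHc l) _) (by
        simp only [hHF]
        exact_mod_cast hG.comp_injective (i := fun k : ℤ => (k, l))
          (fun a b h => (Prod.ext_iff.1 h).1)) 0
    simpa [hHF] using this
  rw [hFs.tsum_prod, hG.tsum_prod,
    ← Summable.tsum_comm (f := fun a b : ℤ => 𝓕 F (a + b * Complex.I)) hG]
  simp only [h1, ← h2]
  -- Only finitely many `m` contribute on the left, so the two sums may be interchanged with no
  -- joint summability of `H l m`.
  have hfin : ∀ l (m : ℤ), m ∉ Finset.Icc (-⌈|R|⌉) ⌈|R|⌉ → H l m = 0 := fun l m hm => by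
    have h' : R < |(m : ℝ)| := by
      by_contra h'
      apply hm
      have h3 : |(m : ℝ)| ≤ ⌈|R|⌉ := (not_lt.1 h').trans ((le_abs_self R).trans (Int.le_ceil _))
      rw [Finset.mem_Icc, ← abs_le]
      exact_mod_cast h3
    simp only [hH, Real.fourier_real_eq, hx _ _ h', smul_zero, integral_zero]
  rw [tsum_eq_sum (s := Finset.Icc (-⌈|R|⌉) ⌈|R|⌉) fun m hm => by
    simp only [hfin _ m hm, tsum_zero]]
  rw [← Summable.tsum_finsetSum fun m _ => hHsum m]
  exact tsum_congr fun l => (tsum_eq_sum fun m hm => hfin l m hm).symm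

/-- The bijection `ℤ[i] ≃ ℤ × ℤ` given by real and imaginary parts. -/
def giEquiv : GaussianInt ≃ ℤ × ℤ where
  toFun z := (z.re, z.im)
  invFun p := ⟨p.1, p.2⟩
  left_inv _ := rfl
  right_inv _ := rfl

lemma schwartz_summable_gi (f : 𝓢(ℂ, ℂ)) :
    Summable fun k : GaussianInt => f (GaussianInt.toComplex k) := by
  simpa only [GaussianInt.toComplex_def, giEquiv, Function.comp_def, Equiv.coe_fn_mk] using
    giEquiv.summable_iff.2 (schwartz_summable f)

lemma poisson_gi {F : ℂ → ℂ} (hF : ContDiff ℝ ∞ F) (hc : HasCompactSupport F) :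
    ∑' k : GaussianInt, F (GaussianInt.toComplex k) =
      ∑' k : GaussianInt, 𝓕 F (GaussianInt.toComplex k) := by
  have h := poisson_prod hF hc
  rw [← giEquiv.tsum_eq, ← giEquiv.tsum_eq] at h
  simp only [GaussianInt.toComplex_def]
  exact h

/-! ### The radial bump function and its Fourier transform -/

lemma Wfun_eq (x : ℝ) : Wfun x = expNegInvGlue ((2 * x - 1) * (5 - 2 * x)) := by
  unfold Wfun expNegInvGlue
  by_cases h : 1 / 2 < x ∧ x < 5 / 2
  · have h1 : 0 < (2 * x - 1) * (5 - 2 * x) := mul_pos (by linarith) (by linarith)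
    rw [if_pos h, if_neg (not_le.2 h1)]
    congr 1
    rw [neg_div, one_div]
  · rw [if_neg h, if_pos]
    by_contra! h1
    apply h
    constructor <;> nlinarith

/-- The radial function `z ↦ W(|z|²)` on `ℂ`. -/
def bump (z : ℂ) : ℂ := (Wfun (Complex.normSq z) : ℂ)

lemma bump_congr {z w : ℂ} (h : ‖z‖ = ‖w‖) : bump z = bump w := by
  simp only [bump, Complex.normSq_eq_norm_sq, h]

lemma contDiff_bump : ContDiff ℝ ∞ bump := by
  have h : bump = fun z : ℂ => Complex.ofRealCLM
      (expNegInvGlue ((2 * ‖z‖ ^ 2 - 1) * (5 - 2 * ‖z‖ ^ 2))) := by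
    ext z
    simp [bump, Wfun_eq, Complex.normSq_eq_norm_sq]
  rw [h]
  have h1 : ContDiff ℝ ∞ fun z : ℂ => ‖z‖ ^ 2 := contDiff_norm_sq ℝ
  refine Complex.ofRealCLM.contDiff.comp (expNegInvGlue.contDiff.comp ?_)
  fun_prop

lemma bump_eq_zero {z : ℂ} (h : 2 < ‖z‖) : bump z = 0 := by
  have : ¬ (1 / 2 < Complex.normSq z ∧ Complex.normSq z < 5 / 2) := by
    rw [Complex.normSq_eq_norm_sq]
    rintro ⟨-, h2⟩
    nlinarith
  rw [bump, Wfun, if_neg this, Complex.ofReal_zero]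

lemma contDiff_bump_affine (c d : ℂ) : ContDiff ℝ ∞ fun z => bump (c + d * z) :=
  contDiff_bump.comp (contDiff_const.add (contDiff_const.mul contDiff_id))

lemma hasCompactSupport_bump_affine (c : ℂ) {d : ℂ} (hd : d ≠ 0) :
    HasCompactSupport fun z => bump (c + d * z) := by
  refine HasCompactSupport.intro (isCompact_closedBall (0 : ℂ) ((2 + ‖c‖) / ‖d‖)) fun z hz => ?_
  rw [mem_closedBall_zero_iff, not_le, div_lt_iff₀ (norm_pos_iff.2 hd)] at hz
  apply bump_eq_zero
  have := norm_sub_norm_le (d * z) (-c)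
  rw [norm_neg, norm_mul, sub_neg_eq_add, add_comm (d * z)] at this
  linarith

/-- The integral defining `W̃ t` is the Fourier integral of `bump` at `-ti`, because
`t (x + yi) / (2i)` has real part `ty / 2`. -/
lemma fourier_bump_neg_I (t : ℝ) : 𝓕 bump (-(t * Complex.I)) = Wtilde t := by
  have hc : HasCompactSupport bump := by
    simpa using hasCompactSupport_bump_affine 0 one_ne_zero
  have hgint : Integrable fun z : ℂ => Real.fourierChar (-⟪z, -(t * Complex.I)⟫) • bump z :=
    (Real.fourierIntegral_convergent_iff _).2 (hc.toSchwartzMap contDiff_bump).integrable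
  rw [Real.fourier_eq, integral_complex_eq hgint, Wtilde]
  refine integral_congr_ae (Filter.Eventually.of_forall fun x => ?_)
  refine integral_congr_ae (Filter.Eventually.of_forall fun y => ?_)
  dsimp only
  rw [Circle.smul_def, Real.fourierChar_apply, smul_eq_mul, mul_comm, bump,
    Complex.normSq_add_mul_I, etilde]
  congr 2
  have h : (t : ℂ) * (x + y * Complex.I) / (2 * Complex.I) = (t * y - t * x * Complex.I) / 2 := by
    rw [mul_comm 2 Complex.I, ← div_div, div_eq_mul_inv _ Complex.I, Complex.inv_I]
    linear_combination (-(t : ℂ) * y / 2) * Complex.I_mul_I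
  rw [h]
  simp [Complex.inner]
  ring

/-- `bump` is radial, hence so is its Fourier transform, whose radial profile is `W̃`. -/
lemma fourier_bump (v : ℂ) : 𝓕 bump v = Wtilde ‖v‖ := by
  obtain ⟨a, ha⟩ : ∃ a : Circle, (a : ℂ) * v = -(‖v‖ * Complex.I) := by
    by_cases hv : v = 0
    · exact ⟨1, by simp [hv]⟩
    · refine ⟨⟨-(‖v‖ * Complex.I) / v, ?_⟩, ?_⟩
      · simp [Submonoid.unitSphere, hv]
      · change -(‖v‖ * Complex.I) / v * v = _
        field_simp
  have h := Real.fourier_comp_linearIsometry (rotation a) bump v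
  have hA : bump ∘ rotation a = bump :=
    funext fun z => bump_congr (LinearIsometryEquiv.norm_map _ z)
  rw [hA, rotation_apply, ha, fourier_bump_neg_I] at h
  exact h

/-- Scaling and translation for the Fourier transform of `bump`. Only `|d|` affects the norm of
`c + d z = d (z + c / d)`, so a real dilation suffices. -/
lemma fourier_bump_affine (c : ℂ) {d : ℂ} (hd : d ≠ 0) (w : ℂ) :
    𝓕 (fun z => bump (c + d * z)) w =
      (Real.fourierChar ⟪c / d, w⟫ : ℂ) * ((‖d‖ ^ 2)⁻¹ : ℝ) * Wtilde (‖w‖ / ‖d‖) := by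
  have hd' : ‖d‖ ≠ 0 := norm_ne_zero_iff.2 hd
  set h : ℂ → ℂ := fun u => (Real.fourierChar (-⟪‖d‖⁻¹ • u - c / d, w⟫) : ℂ) * bump u with hh
  have h1 : ∀ z, Real.fourierChar (-⟪z, w⟫) • bump (c + d * z) = h (‖d‖ • (z + c / d)) :=
    fun z => by
      rw [hh, Circle.smul_def, smul_eq_mul]
      dsimp only
      rw [smul_smul, inv_mul_cancel₀ hd', one_smul, add_sub_cancel_right]
      congr 1
      apply bump_congr
      rw [norm_smul, norm_norm, ← norm_mul]
      congr 1
      field_simp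
      ring
  have h2 : ∀ u, h u = (Real.fourierChar ⟪c / d, w⟫ : ℂ) *
      (Real.fourierChar (-⟪u, ‖d‖⁻¹ • w⟫) • bump u) := fun u => by
    rw [hh, Circle.smul_def, smul_eq_mul, ← mul_assoc, ← Circle.coe_mul, ← AddChar.map_add_eq_mul]
    dsimp only
    congr 3
    rw [inner_sub_left, real_inner_smul_left, real_inner_smul_right]
    ring
  rw [Real.fourier_eq]
  simp only [h1]
  rw [integral_add_right_eq_self (fun z => h (‖d‖ • z)) (c / d), Measure.integral_comp_smul,
    Complex.finrank_real_complex]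
  simp only [h2]
  rw [integral_const_mul, ← Real.fourier_eq, fourier_bump, norm_smul, norm_inv, norm_norm,
    abs_of_nonneg (by positivity), Complex.real_smul, inv_mul_eq_div]
  ring

/-! ### Assembling the summation formula -/

lemma OddMod.norm_symbol_le {n : GaussianInt} (hn : OddMod n) (a : GaussianInt) :
    ‖quarticSymbol a n‖ ≤ 1 := by
  by_cases h : IsCoprime a n
  · have h1 := congrArg norm (hn.symbol_mul_star h)
    rw [norm_mul, norm_star, norm_one] at h1
    nlinarith [norm_nonneg (quarticSymbol a n)]
  · rw [hn.symbol_zero h]; simp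

/-- Division with remainder by `q`: every Gaussian integer is uniquely a chosen residue plus a
multiple of `q`. -/
lemma residue_bijective {q : GaussianInt} (hq : q ≠ 0) : Function.Bijective
    fun p : (GaussianInt ⧸ Ideal.span {q}) × GaussianInt => Quotient.out p.1 + q * p.2 := by
  constructor
  · rintro ⟨x, l⟩ ⟨y, m⟩ h
    dsimp only at h
    have hxy : x = y := by
      rw [← mk_out q x, ← mk_out q y, mk_eq_iff]
      exact ⟨m - l, by linear_combination h⟩
    subst hxy
    have : q * l = q * m := by linear_combination h
    rw [mul_left_cancel₀ hq this]
  · intro m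
    obtain ⟨d, hd⟩ := dvd_out_sub q m
    exact ⟨(Ideal.Quotient.mk _ m, -d), by dsimp only; linear_combination hd⟩

/-- The involution `k ↦ -i k̄` of `ℤ[i]`, which turns the pairing `⟨z, k⟩` into `-Im (k z)`. -/
def dualEquiv : GaussianInt ≃ GaussianInt where
  toFun k := ⟨-k.im, -k.re⟩
  invFun k := ⟨-k.im, -k.re⟩
  left_inv k := by simp
  right_inv k := by simp

lemma toComplex_dual (k : GaussianInt) :
    GaussianInt.toComplex (dualEquiv k) = -(k.im : ℂ) - k.re * Complex.I := by
  rw [GaussianInt.toComplex_def]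
  simp only [dualEquiv, Equiv.coe_fn_mk]
  push_cast
  ring

lemma fourierChar_dual (z : ℂ) (k : GaussianInt) :
    (Real.fourierChar ⟪z, GaussianInt.toComplex (dualEquiv k)⟫ : ℂ) =
      etilde (-(GaussianInt.toComplex k * z / (2 * Complex.I))) := by
  rw [Real.fourierChar_apply, etilde]
  congr 1
  have h : GaussianInt.toComplex k * z / (2 * Complex.I) =
      -(GaussianInt.toComplex k * z * Complex.I) / 2 := by
    rw [mul_comm 2 Complex.I, ← div_div, div_eq_mul_inv _ Complex.I, Complex.inv_I]
    ring
  rw [h]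
  rw [toComplex_dual, GaussianInt.toComplex_def k]
  apply Complex.ext <;> simp [Complex.inner] <;> ring

lemma norm_dual (k : GaussianInt) :
    ‖GaussianInt.toComplex (dualEquiv k)‖ = ‖GaussianInt.toComplex k‖ := by
  rw [← sq_eq_sq₀ (norm_nonneg _) (norm_nonneg _), ← Complex.normSq_eq_norm_sq,
    ← Complex.normSq_eq_norm_sq]
  rw [toComplex_dual, GaussianInt.toComplex_def k]
  simp [Complex.normSq_apply]
  ring

lemma toReal_norm (k : GaussianInt) :
    (Zsqrtd.norm k : ℝ) = ‖GaussianInt.toComplex k‖ ^ 2 := by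
  rw [GaussianInt.intCast_real_norm, Complex.normSq_eq_norm_sq]

/-- Poisson summation over the residue class of `a` modulo `q`. -/
lemma poisson_class {q : GaussianInt} (hq : q ≠ 0) {M : ℝ} (hM : 0 < M) (a : GaussianInt) :
    (∑' l : GaussianInt, (Wfun ((Zsqrtd.norm (a + q * l) : ℝ) / M) : ℂ)) =
      ∑' k : GaussianInt, (M : ℂ) / (Zsqrtd.norm q : ℂ) *
        Wtilde (Real.sqrt ((Zsqrtd.norm k : ℝ) * M / (Zsqrtd.norm q : ℝ))) *
        etilde (-(GaussianInt.toComplex (k * a) / (2 * Complex.I * GaussianInt.toComplex q))) ∧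
    Summable fun k : GaussianInt => (M : ℂ) / (Zsqrtd.norm q : ℂ) *
        Wtilde (Real.sqrt ((Zsqrtd.norm k : ℝ) * M / (Zsqrtd.norm q : ℝ))) *
        etilde (-(GaussianInt.toComplex (k * a) / (2 * Complex.I * GaussianInt.toComplex q))) := by
  have hs : 0 < Real.sqrt M := Real.sqrt_pos.2 hM
  have hsc : (Real.sqrt M : ℂ) ≠ 0 := by exact_mod_cast hs.ne'
  have hqc : GaussianInt.toComplex q ≠ 0 := by simpa using hq
  have hd : GaussianInt.toComplex q / Real.sqrt M ≠ 0 := div_ne_zero hqc hsc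
  have hnd : ‖GaussianInt.toComplex q / Real.sqrt M‖ = ‖GaussianInt.toComplex q‖ / Real.sqrt M := by
    rw [norm_div, Complex.norm_real, Real.norm_of_nonneg hs.le]
  set F : ℂ → ℂ := fun z => bump (GaussianInt.toComplex a / Real.sqrt M +
    GaussianInt.toComplex q / Real.sqrt M * z) with hFdef
  have hF : ContDiff ℝ ∞ F := contDiff_bump_affine _ _
  have hc : HasCompactSupport F := hasCompactSupport_bump_affine _ hd
  have hterm : ∀ k : GaussianInt, 𝓕 F (GaussianInt.toComplex (dualEquiv k)) =
      (M : ℂ) / (Zsqrtd.norm q : ℂ) *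
        Wtilde (Real.sqrt ((Zsqrtd.norm k : ℝ) * M / (Zsqrtd.norm q : ℝ))) *
        etilde (-(GaussianInt.toComplex (k * a) / (2 * Complex.I * GaussianInt.toComplex q))) := by
    intro k
    rw [hFdef, fourier_bump_affine _ hd, fourierChar_dual, norm_dual, hnd]
    have e1 : ((((‖GaussianInt.toComplex q‖ / Real.sqrt M) ^ 2)⁻¹ : ℝ) : ℂ) =
        (M : ℂ) / (Zsqrtd.norm q : ℂ) := by
      rw [div_pow, Real.sq_sqrt hM.le, inv_div, ← toReal_norm]
      push_cast
      rfl
    have e2 : ‖GaussianInt.toComplex k‖ / (‖GaussianInt.toComplex q‖ / Real.sqrt M) =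
        Real.sqrt ((Zsqrtd.norm k : ℝ) * M / (Zsqrtd.norm q : ℝ)) := by
      rw [toReal_norm, toReal_norm, Real.sqrt_div (by positivity), Real.sqrt_mul (by positivity),
        Real.sqrt_sq (norm_nonneg _), Real.sqrt_sq (norm_nonneg _), div_div_eq_mul_div]
    have e3 : GaussianInt.toComplex k * (GaussianInt.toComplex a / Real.sqrt M /
        (GaussianInt.toComplex q / Real.sqrt M)) / (2 * Complex.I) =
        GaussianInt.toComplex (k * a) / (2 * Complex.I * GaussianInt.toComplex q) := by
      rw [map_mul]
      field_simp
    rw [e1, e2, e3]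
    ring
  constructor
  · simp only [← hterm]
    rw [dualEquiv.tsum_eq fun k => 𝓕 F (GaussianInt.toComplex k), ← poisson_gi hF hc]
    refine tsum_congr fun l => ?_
    rw [hFdef]
    simp only [bump]
    have : GaussianInt.toComplex a / Real.sqrt M + GaussianInt.toComplex q / Real.sqrt M *
        GaussianInt.toComplex l = GaussianInt.toComplex (a + q * l) / Real.sqrt M := by
      rw [map_add, map_mul]; ring
    rw [this, map_div₀, ← GaussianInt.intCast_real_norm, Complex.normSq_ofReal,
      Real.mul_self_sqrt hM.le]
  · simp only [← hterm]
    exact dualEquiv.summable_iff.2 (schwartz_summable_gi (𝓕 (hc.toSchwartzMap hF)))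

lemma summable_left {n₁ n₂ : GaussianInt} (h₁ : OddMod n₁) (h₂ : OddMod n₂) {M : ℝ} (hM : 0 < M) :
    Summable fun m : GaussianInt => (Wfun ((Zsqrtd.norm m : ℝ) / M) : ℂ) * chi n₁ n₂ m := by
  have hsc : (Real.sqrt M : ℂ) ≠ 0 := by exact_mod_cast (Real.sqrt_pos.2 hM).ne'
  have hs := schwartz_summable_gi ((hasCompactSupport_bump_affine 0
    (inv_ne_zero hsc)).toSchwartzMap (contDiff_bump_affine _ _))
  refine Summable.of_norm_bounded hs.norm fun m => ?_
  have e : bump (0 + (Real.sqrt M : ℂ)⁻¹ * GaussianInt.toComplex m) =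
      (Wfun ((Zsqrtd.norm m : ℝ) / M) : ℂ) := by
    rw [bump, zero_add, inv_mul_eq_div, map_div₀, ← GaussianInt.intCast_real_norm,
      Complex.normSq_ofReal, Real.mul_self_sqrt hM.le]
  rw [norm_mul, HasCompactSupport.toSchwartzMap_toFun, e]
  refine mul_le_of_le_one_right (norm_nonneg _) ?_
  rw [chi, norm_mul, norm_star]
  exact mul_le_one₀ (h₁.norm_symbol_le m) (norm_nonneg _) (h₂.norm_symbol_le m)

/-- Lemma 4.1 (Poisson summation): for squarefree primary `n₁, n₂` with `n₁, n₂, 2` pairwise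
coprime, `q = n₁n₂` and `χ(m) = (m/n₁)₄ conj((m/n₂)₄)`,
`Σ_{m∈ℤ[i]} W(N(m)/M) χ(m) = (χ(-2i) g(n₁) conj(g(n₂)) M / N(q)) (n₂/n₁)₄ conj((n₁/n₂)₄)
  (-1/n₂)₄ Σ_{k∈ℤ[i]} W̃(√(N(k)M/N(q))) conj(χ)(k)`. -/
theorem poisson_summation_quartic :
    ∀ n₁ n₂ : GaussianInt, Squarefree n₁ → Squarefree n₂ → Primary n₁ → Primary n₂ →
      IsCoprime n₁ n₂ → IsCoprime n₁ 2 → IsCoprime n₂ 2 →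
      ∀ M : ℝ, 0 < M →
        (∑' m : GaussianInt, ((Wfun ((Zsqrtd.norm m : ℝ) / M) : ℂ) *
            (quarticSymbol m n₁ * star (quarticSymbol m n₂))))
          = (quarticSymbol (-2 * gi) n₁ * star (quarticSymbol (-2 * gi) n₂)) *
              gaussSum4 n₁ * star (gaussSum4 n₂) * (M : ℂ) /
              (Zsqrtd.norm (n₁ * n₂) : ℂ) *
            quarticSymbol n₂ n₁ * star (quarticSymbol n₁ n₂) * quarticSymbol (-1) n₂ *
            ∑' k : GaussianInt,
              (Wtilde (Real.sqrt ((Zsqrtd.norm k : ℝ) * M / (Zsqrtd.norm (n₁ * n₂) : ℝ))) *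
                star (quarticSymbol k n₁ * star (quarticSymbol k n₂))) := by
  intro n₁ n₂ hs₁ hs₂ _ _ hcop hodd₁ hodd₂ M hM
  have h₁ : OddMod n₁ := ⟨hs₁.ne_zero, hodd₁⟩
  have h₂ : OddMod n₂ := ⟨hs₂.ne_zero, hodd₂⟩
  have hq : n₁ * n₂ ≠ 0 := mul_ne_zero h₁.1 h₂.1
  have : Finite (GaussianInt ⧸ Ideal.span {n₁ * n₂}) := finite_quot hq
  have : Fintype (GaussianInt ⧸ Ideal.span {n₁ * n₂}) := Fintype.ofFinite _
  have hper : ∀ a l, chi n₁ n₂ (a + n₁ * n₂ * l) = chi n₁ n₂ a := fun a l => by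
    rw [chi, chi, h₁.symbol_congr (a := a + n₁ * n₂ * l) (b := a) ⟨n₂ * l, by ring⟩,
      h₂.symbol_congr (a := a + n₁ * n₂ * l) (b := a) ⟨n₁ * l, by ring⟩]
  set e := Equiv.ofBijective _ (residue_bijective hq) with he
  have hsum := e.summable_iff.2 (summable_left h₁ h₂ hM)
  have hleft : (∑' m : GaussianInt, (Wfun ((Zsqrtd.norm m : ℝ) / M) : ℂ) * chi n₁ n₂ m) =
      ∑ x : GaussianInt ⧸ Ideal.span {n₁ * n₂}, ∑' k : GaussianInt, chi n₁ n₂ (Quotient.out x) *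
        ((M : ℂ) / (Zsqrtd.norm (n₁ * n₂) : ℂ) *
        Wtilde (Real.sqrt ((Zsqrtd.norm k : ℝ) * M / (Zsqrtd.norm (n₁ * n₂) : ℝ))) *
        etilde (-(GaussianInt.toComplex (k * Quotient.out x) /
          (2 * Complex.I * GaussianInt.toComplex (n₁ * n₂))))) := by
    rw [← e.tsum_eq]
    refine hsum.tsum_prod.trans ?_
    rw [tsum_fintype]
    refine Finset.sum_congr rfl fun x _ => ?_
    rw [tsum_mul_left, ← (poisson_class hq hM (Quotient.out x)).1, ← tsum_mul_left]
    refine tsum_congr fun l => ?_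
    simp only [Function.comp_apply, he, Equiv.ofBijective_apply, hper]
    ring
  refine hleft.trans ?_
  refine (Summable.tsum_finsetSum fun x _ => (poisson_class hq hM
    (Quotient.out x)).2.mul_left (chi n₁ n₂ (Quotient.out x))).symm.trans ?_
  rw [← tsum_mul_left]
  refine tsum_congr fun k => ?_
  have hk := complete_sum h₁ h₂ hs₁ hs₂ hcop k
  rw [resSum, tsum_fintype] at hk
  rw [star_mul', star_star]
  calc _ = (M : ℂ) / (Zsqrtd.norm (n₁ * n₂) : ℂ) *
        Wtilde (Real.sqrt ((Zsqrtd.norm k : ℝ) * M / (Zsqrtd.norm (n₁ * n₂) : ℝ))) *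
        ∑ x : GaussianInt ⧸ Ideal.span {n₁ * n₂}, chi n₁ n₂ (Quotient.out x) *
        etilde (-(GaussianInt.toComplex (k * Quotient.out x) /
          (2 * Complex.I * GaussianInt.toComplex (n₁ * n₂)))) := by
        rw [Finset.mul_sum]
        exact Finset.sum_congr rfl fun x _ => by ring
    _ = _ := by
        rw [hk, chi]
        ring

end
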